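/- Let n ≥ 1 and let K be a smooth, strictly convex body in ℝ^{n+1} with positive support function h. Define g : ℝ^{n+1}\{0} → ℝ by g(z) := log( h_K(z)^{n+2} · det(A(z/‖z‖) + (z/‖z‖)⊗(z/‖z‖)) · ‖z‖^{−(n+2)} ), a 0-homogeneous function whose restriction to S^n equals log(h^{n+2}/𝒦). Then for all w₁, w₂ ∈ ℝ^{n+1}: ∫_{S^n} ⟨∇g(x), w₁⟩·⟨x, w₂⟩·h(x)·det(A(x)+x⊗x) dθ(x) = 0; that is, ∫ ∇̄log(h^{n+2}/𝒦) ⊗ x dV = 0. -/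

import Mathlib

open MeasureTheory Metric Real
open scoped InnerProductSpace ENNReal Topology

noncomputable section

/-- Euclidean space `ℝ^{n+1}`. -/
abbrev Eu (n : ℕ) : Type := EuclideanSpace ℝ (Fin (n + 1))

/-- The unit sphere `S^n ⊆ ℝ^{n+1}` as a subtype. -/
abbrev Sph (n : ℕ) : Type := Metric.sphere (0 : Eu n) 1

/-- The spherical Lebesgue (surface) measure on `S^n`. -/
def sphMeas (n : ℕ) : Measure (Sph n) := (volume : Measure (Eu n)).toSphere

/-- The support function of a set `K ⊆ ℝ^{n+1}`. -/
def sfn {n : ℕ} (K : Set (Eu n)) (z : Eu n) : ℝ :=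
  sSup ((fun y => ⟪z, y⟫_ℝ) '' K)

/-- The Hessian endomorphism `A(x) = D(∇ h_K)(x)`. -/
def hessA {n : ℕ} (K : Set (Eu n)) (x : Eu n) : Eu n →L[ℝ] Eu n :=
  fderiv ℝ (gradient (sfn K)) x

/-- The rank-one endomorphism `x ⊗ x : v ↦ ⟨v, x⟩ x`. -/
def tens {n : ℕ} (x : Eu n) : Eu n →L[ℝ] Eu n :=
  (innerSL ℝ x).smulRight x

/-- `det (A(x) + x ⊗ x)`, the reciprocal Gauss curvature `1/𝒦` at `x ∈ S^n`. -/
def rK {n : ℕ} (K : Set (Eu n)) (x : Eu n) : ℝ :=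
  LinearMap.det ((hessA K x + tens x : Eu n →L[ℝ] Eu n) : Eu n →ₗ[ℝ] Eu n)

/-- `K` is a smooth, strictly convex body with positive support function. -/
structure IsSmoothConvexBody {n : ℕ} (K : Set (Eu n)) : Prop where
  compact : IsCompact K
  convex : Convex ℝ K
  interior_nonempty : (interior K).Nonempty
  pos : ∀ x : Sph n, 0 < sfn K x
  smooth : ContDiffOn ℝ (⊤ : ℕ∞) (sfn K) {(0 : Eu n)}ᶜ
  posdef : ∀ x : Sph n, ∀ v : Eu n, v ≠ 0 →
    0 < ⟪(hessA K (x : Eu n) + tens (x : Eu n)) v, v⟫_ℝ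

/-- The density `h·det(A + x⊗x)` of the measure `dV` with respect to `dθ`. -/
def dens {n : ℕ} (K : Set (Eu n)) (x : Eu n) : ℝ := sfn K x * rK K x

/-- The centroid-type point `c(K) = (∫ ∇h_K dV)/(∫ dV)`. -/
def cK {n : ℕ} (K : Set (Eu n)) : Eu n :=
  (∫ x : Sph n, dens K x ∂sphMeas n)⁻¹ •
    ∫ x : Sph n, dens K x • gradient (sfn K) x ∂sphMeas n

/-- The support function of the translated body `K - c(K)`. -/
def tsfn {n : ℕ} (K : Set (Eu n)) (x : Eu n) : ℝ := sfn K x - ⟪x, cK K⟫_ℝ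


/-- The 0-homogeneous extension of `log (h^{n+2}/𝒦)` to `ℝ^{n+1} \ {0}`. -/
def logEntropyDensity {n : ℕ} (K : Set (Eu n)) (z : Eu n) : ℝ :=
  Real.log (sfn K z ^ (n + 2) * rK K (‖z‖⁻¹ • z) * ‖z‖ ^ (-((n : ℝ) + 2)))


lemma fderiv_hom' {E G : Type*} [NormedAddCommGroup E] [NormedSpace ℝ E]
    [NormedAddCommGroup G] [NormedSpace ℝ G] {f : E → G} {z : E} (c s : ℝ)
    (hf : ∀ᶠ y in 𝓝 z, f (c • y) = s • f y) :
    c • fderiv ℝ f (c • z) = s • fderiv ℝ f z := by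
  rw [← fderiv_comp_smul, Filter.EventuallyEq.fderiv_eq (f := fun y => s • f y) hf]
  exact congrFun (fderiv_const_smul_field (f := f) s) z

lemma fderiv_hom {E G : Type*} [NormedAddCommGroup E] [NormedSpace ℝ E]
    [NormedAddCommGroup G] [NormedSpace ℝ G] {f : E → G} (c s : ℝ)
    (hf : ∀ y : E, y ≠ 0 → f (c • y) = s • f y) (z : E) (hz : z ≠ 0) :
    c • fderiv ℝ f (c • z) = s • fderiv ℝ f z :=
  fderiv_hom' c s ((eventually_ne_nhds hz).mono hf)

lemma polar_prod (n : ℕ) (Q p : Eu n → ℝ) (q : ℝ → ℝ)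
    (h : ∀ r : ℝ, 0 < r → ∀ x : Sph n, Q (r • (x : Eu n)) = q r * p x) :
    ∫ z, Q z = (∫ x : Sph n, p x ∂sphMeas n) * ∫ r in Set.Ioi (0 : ℝ), r ^ n * q r := by
  have hd : Module.finrank ℝ (Eu n) - 1 = n := by simp
  calc
    ∫ z, Q z = ∫ x : ({(0)}ᶜ : Set (Eu n)), Q x.1 ∂((volume : Measure (Eu n)).comap (↑)) := by
      rw [integral_subtype_comap (measurableSet_singleton _).compl fun x ↦ Q x,
        restrict_compl_singleton]
    _ = ∫ x : Sph n × Set.Ioi (0 : ℝ), p x.1 * q x.2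
          ∂(volume : Measure (Eu n)).toSphere.prod (.volumeIoiPow (Module.finrank ℝ (Eu n) - 1)) := by
      rw [← (volume : Measure (Eu n)).measurePreserving_homeomorphUnitSphereProd.integral_comp
        (Homeomorph.measurableEmbedding _)]
      congr 1
      ext z
      have hz : ‖(z : Eu n)‖ ≠ 0 := norm_ne_zero_iff.2 z.2
      have := h ‖(z : Eu n)‖ (norm_pos_iff.2 z.2) ((homeomorphUnitSphereProd (Eu n) z).1)
      rw [mul_comm]
      simp only [homeomorphUnitSphereProd_apply_fst_coe,
        homeomorphUnitSphereProd_apply_snd_coe, smul_smul, mul_inv_cancel₀ hz, one_smul] at this ⊢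
      exact this
    _ = (∫ x : Sph n, p x ∂sphMeas n) *
          ∫ r : Set.Ioi (0 : ℝ), q r ∂.volumeIoiPow (Module.finrank ℝ (Eu n) - 1) := by
      rw [sphMeas]
      exact integral_prod_mul (fun x : Sph n => p x) (fun r : Set.Ioi (0 : ℝ) => q r)
    _ = _ := by
      rw [hd]
      simp only [Measure.volumeIoiPow, ENNReal.ofReal]
      rw [integral_withDensity_eq_integral_smul,
        integral_subtype_comap measurableSet_Ioi fun a ↦ Real.toNNReal (a ^ n) • q a,
        setIntegral_congr_fun measurableSet_Ioi fun x hx ↦ ?_]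
      · rw [NNReal.smul_def, Real.coe_toNNReal _ (pow_nonneg (le_of_lt hx) _), smul_eq_mul]
      · exact (measurable_subtype_coe.pow_const _).real_toNNReal

/-- A bump function on the line. -/
def bmp : ContDiffBump (2 : ℝ) := ⟨1/2, 1, by norm_num, by norm_num⟩

lemma bmp_zero {t : ℝ} (h : t ≤ 1 ∨ 3 ≤ t) : bmp t = 0 := by
  apply bmp.zero_of_le_dist
  rw [Real.dist_eq]
  show (1:ℝ) ≤ _
  rcases h with h | h
  · rw [abs_of_nonpos] <;> linarith
  · rw [abs_of_nonneg] <;> linarith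

lemma dbmp_zero {t : ℝ} (h : t < 1 ∨ 3 < t) : deriv bmp t = 0 := by
  have : (bmp : ℝ → ℝ) =ᶠ[𝓝 t] fun _ => 0 := by
    rcases h with h | h
    · filter_upwards [gt_mem_nhds h] with s hs using bmp_zero (Or.inl hs.le)
    · filter_upwards [lt_mem_nhds h] with s hs using bmp_zero (Or.inr hs.le)
  rw [this.deriv_eq]; simp

lemma cut_cont {n : ℕ} {k : ℝ → ℝ} (hk : Continuous k) (hk0 : ∀ t, t < 1 ∨ 3 < t → k t = 0)
    {f : Eu n → ℝ} (hf : ContinuousOn f {0}ᶜ) :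
    Continuous (fun z => k (‖z‖ ^ 2) * f z) ∧ HasCompactSupport (fun z => k (‖z‖ ^ 2) * f z) := by
  constructor
  · rw [continuous_iff_continuousAt]
    intro z
    by_cases hz : z = 0
    · subst hz
      have : (fun z : Eu n => k (‖z‖ ^ 2) * f z) =ᶠ[𝓝 0] fun _ => 0 := by
        filter_upwards [Metric.ball_mem_nhds (0 : Eu n) one_pos] with y hy
        rw [hk0 _ (Or.inl _), zero_mul]
        have : ‖y‖ < 1 := by simpa using hy
        nlinarith [norm_nonneg y]
      exact continuousAt_const.congr this.symm
    · have h1 := hf.continuousAt (isOpen_compl_singleton.mem_nhds hz)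
      have h2 : Continuous (fun z : Eu n => k (‖z‖ ^ 2)) := by fun_prop
      exact h2.continuousAt.mul h1
  · apply HasCompactSupport.intro (isCompact_closedBall (0 : Eu n) 2)
    intro y hy
    have : 2 < ‖y‖ := by simpa using hy
    rw [hk0 _ (Or.inr _), zero_mul]
    nlinarith

lemma sphere_div_zero (n : ℕ) (f : Eu n → ℝ) (hf : ContDiffOn ℝ 1 f {0}ᶜ)
    (hh : ∀ r : ℝ, 0 < r → ∀ z, z ≠ 0 → f (r • z) = (r ^ n)⁻¹ * f z) (w : Eu n) :
    ∫ x : Sph n, fderiv ℝ f x w ∂sphMeas n = 0 := by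
  have hfd : ∀ z, z ≠ 0 → DifferentiableAt ℝ f z := fun z hz =>
    (hf.differentiableOn one_ne_zero).differentiableAt (isOpen_compl_singleton.mem_nhds hz)
  have hf' : ContinuousOn (fun z => fderiv ℝ f z w) {0}ᶜ :=
    (hf.continuousOn_fderiv_of_isOpen isOpen_compl_singleton le_rfl).clm_apply continuousOn_const
  have hbc : Continuous (bmp : ℝ → ℝ) := bmp.continuous
  have hbd : Differentiable ℝ (bmp : ℝ → ℝ) := (bmp.contDiff (n := 1)).differentiable one_ne_zero
  have hdc : Continuous (deriv bmp) := (bmp.contDiff (n := 1)).continuous_deriv le_rfl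
  have hb0 : ∀ t, t < 1 ∨ 3 < t → bmp t = 0 := fun t ht =>
    bmp_zero (ht.imp le_of_lt le_of_lt)
  obtain ⟨c1, s1⟩ := cut_cont hbc hb0 hf'
  obtain ⟨c2, s2⟩ := cut_cont (n := n) hdc (fun t ht => dbmp_zero ht)
    (f := fun z => (2 * ⟪z, w⟫_ℝ) * f z) (by
      apply ContinuousOn.mul _ hf.continuousOn
      fun_prop)
  obtain ⟨c0, s0⟩ := cut_cont hbc hb0 hf.continuousOn
  -- derivative of the cut off function
  have hG : ∀ z : Eu n, HasLineDerivAt ℝ (fun z => bmp (‖z‖ ^ 2) * f z)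
      (bmp (‖z‖ ^ 2) * fderiv ℝ f z w + deriv bmp (‖z‖ ^ 2) * ((2 * ⟪z, w⟫_ℝ) * f z)) z w := by
    intro z
    by_cases hz : z = 0
    · subst hz
      have : (fun z : Eu n => bmp (‖z‖ ^ 2) * f z) =ᶠ[𝓝 0] fun _ => 0 := by
        filter_upwards [Metric.ball_mem_nhds (0 : Eu n) one_pos] with y hy
        rw [hb0 _ (Or.inl _), zero_mul]
        have : ‖y‖ < 1 := by simpa using hy
        nlinarith [norm_nonneg y]
      have h0 : HasFDerivAt (fun z : Eu n => bmp (‖z‖ ^ 2) * f z) (0 : Eu n →L[ℝ] ℝ) 0 :=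
        (hasFDerivAt_const (0:ℝ) (0 : Eu n)).congr_of_eventuallyEq this
      have := h0.hasLineDerivAt w
      rw [hb0 (‖(0:Eu n)‖ ^2) (by simp), dbmp_zero (by simp)]
      simpa using this
    · have h1 : HasFDerivAt (fun z : Eu n => ‖z‖ ^ 2) _ z := (hasStrictFDerivAt_norm_sq z).hasFDerivAt
      have h2 := (hbd (‖z‖ ^ 2)).hasDerivAt.comp_hasFDerivAt z h1
      have h3 := (h2.mul (hfd z hz).hasFDerivAt).hasLineDerivAt w
      have he : bmp (‖z‖ ^ 2) * fderiv ℝ f z w + deriv bmp (‖z‖ ^ 2) * ((2 * ⟪z, w⟫_ℝ) * f z)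
          = (((bmp : ℝ → ℝ) ∘ fun z : Eu n => ‖z‖ ^ 2) z • fderiv ℝ f z +
            f z • deriv bmp (‖z‖ ^ 2) • 2 • (innerSL ℝ) z) w := by
        simp
        ring
      rw [he]
      exact h3
  have hint := integral_bilinear_hasLineDerivAt_right_eq_neg_left_of_integrable
    (μ := (volume : Measure (Eu n))) (B := ContinuousLinearMap.mul ℝ ℝ)
    (f := fun _ => (1 : ℝ)) (f' := fun _ => 0)
    (g := fun z => bmp (‖z‖ ^ 2) * f z)
    (g' := fun z => bmp (‖z‖ ^ 2) * fderiv ℝ f z w + deriv bmp (‖z‖ ^ 2) * ((2 * ⟪z, w⟫_ℝ) * f z))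
    (v := w) (by simp)
    (by
      simp only [ContinuousLinearMap.mul_apply', one_mul]
      exact (c1.integrable_of_hasCompactSupport s1).add
        (c2.integrable_of_hasCompactSupport s2))
    (by simpa using c0.integrable_of_hasCompactSupport s0)
    (fun x _ => by simpa using (hasFDerivAt_const (1:ℝ) x).hasLineDerivAt w)
    (fun x _ => hG x)
  simp only [ContinuousLinearMap.mul_apply', one_mul, zero_mul, integral_zero, neg_zero] at hint
  rw [integral_add (c1.integrable_of_hasCompactSupport s1)
    (c2.integrable_of_hasCompactSupport s2)] at hint
  have hnx : ∀ r : ℝ, 0 < r → ∀ x : Sph n, ‖r • (x : Eu n)‖ = r := by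
    intro r hr x
    rw [norm_smul, norm_eq_of_mem_sphere, mul_one, Real.norm_of_nonneg hr.le]
  have hx0 : ∀ x : Sph n, (x : Eu n) ≠ 0 := fun x => ne_zero_of_mem_unit_sphere x
  rw [polar_prod n _ (fun x => fderiv ℝ f x w) (fun r => bmp (r ^ 2) * (r ^ (n + 1))⁻¹),
    polar_prod n _ (fun x => (2 * ⟪x, w⟫_ℝ) * f x) (fun r => deriv bmp (r ^ 2) * r * (r ^ n)⁻¹)]
    at hint
  rotate_left
  · intro r hr x
    simp only [hnx r hr x, hh r hr x (hx0 x), inner_smul_left]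
    simp; ring
  · intro r hr x
    have := congrArg (fun L : Eu n →L[ℝ] ℝ => L w) (fderiv_hom r ((r ^ n)⁻¹) (hh r hr) x (hx0 x))
    simp only [hnx r hr x]
    simp only [smul_apply, smul_eq_mul] at this
    have h2 : fderiv ℝ f (r • (x : Eu n)) w = (r ^ (n+1))⁻¹ * fderiv ℝ f x w := by
      field_simp at this ⊢
      rw [← this]; ring
    rw [h2]; ring
  -- the second radial integral vanishes
  have hb : ∫ r in Set.Ioi (0 : ℝ), r ^ n * (deriv bmp (r ^ 2) * r * (r ^ n)⁻¹) = 0 := by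
    have h1 : ∫ r in Set.Ioi (0 : ℝ), r ^ n * (deriv bmp (r ^ 2) * r * (r ^ n)⁻¹)
        = ∫ r in Set.Ioi (0 : ℝ), deriv bmp (r ^ 2) * r := by
      apply setIntegral_congr_fun measurableSet_Ioi
      intro r hr
      have : r ≠ 0 := ne_of_gt hr
      simp only
      field_simp
    rw [h1]
    have hcs : HasCompactSupport (fun r : ℝ => deriv bmp (r ^ 2) * r) := by
      apply HasCompactSupport.intro (isCompact_Icc (a := (-2 : ℝ)) (b := 2))
      intro y hy
      rw [dbmp_zero (Or.inr _), zero_mul]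
      simp only [Set.mem_Icc, not_and_or, not_le] at hy
      rcases hy with hy | hy <;> nlinarith
    have := integral_Ioi_of_hasDerivAt_of_tendsto (a := 0) (m := 0)
      (f := fun r => 2⁻¹ * bmp (r ^ 2)) (f' := fun r => deriv bmp (r ^ 2) * r)
      (by have : Continuous (fun r : ℝ => 2⁻¹ * bmp (r ^ 2)) := by fun_prop
          exact this.continuousWithinAt)
      (fun x _ => by
        have h2 := ((hbd (x ^ 2)).hasDerivAt.comp x (hasDerivAt_pow 2 x)).const_mul (2⁻¹ : ℝ)
        have he : deriv bmp (x ^ 2) * x =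
            2⁻¹ * (deriv bmp (x ^ 2) * (((2 : ℕ) : ℝ) * x ^ (2 - 1))) := by
          simp; ring
        rw [he]
        exact h2)
      (by
        have : Continuous (fun r : ℝ => deriv bmp (r ^ 2) * r) := by fun_prop
        exact (this.integrable_of_hasCompactSupport hcs).integrableOn)
      (by
        apply tendsto_const_nhds.congr'
        filter_upwards [Filter.eventually_gt_atTop 2] with r hr
        rw [bmp_zero (Or.inr (by nlinarith)), mul_zero])
    rw [this, bmp_zero (by simp)]
    simp
  rw [hb, mul_zero, add_zero] at hint
  -- the first radial integral is nonzero
  rcases mul_eq_zero.1 hint with h | h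
  · exact h
  exfalso
  obtain ⟨c3, s3⟩ := cut_cont (n := n) hbc hb0 (f := fun z => (‖z‖ ^ (n + 1))⁻¹) (by
    apply ContinuousOn.inv₀
    · fun_prop
    · intro z hz
      exact pow_ne_zero _ (norm_ne_zero_iff.2 hz))
  have hp := polar_prod n (fun z => bmp (‖z‖ ^ 2) * (‖z‖ ^ (n + 1))⁻¹) (fun x => 1)
    (fun r => bmp (r ^ 2) * (r ^ (n + 1))⁻¹) (by
      intro r hr x
      simp only [hnx r hr x, mul_one])
  rw [h, mul_zero] at hp
  have hpos := c3.integral_pos_of_hasCompactSupport_nonneg_nonzero (μ := volume)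
    (x := (√2) • EuclideanSpace.single (0 : Fin (n+1)) (1:ℝ)) s3
    (fun z => mul_nonneg bmp.nonneg (by positivity)) (by
      simp only [norm_smul, PiLp.norm_single, norm_one, mul_one, Real.norm_eq_abs, sq_abs]
      have : bmp (√2 ^ 2) = 1 := by
        rw [Real.sq_sqrt (by norm_num)]
        exact bmp.one_of_mem_closedBall (by simp [bmp])
      rw [this]
      positivity)
  exact absurd hp hpos.ne'

open scoped ContDiff

/-- determinant of a continuous endomorphism -/
def detL {n : ℕ} (L : Eu n →L[ℝ] Eu n) : ℝ := LinearMap.det (L : Eu n →ₗ[ℝ] Eu n)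

lemma detL_mul {n : ℕ} (L L' : Eu n →L[ℝ] Eu n) : detL (L * L') = detL L * detL L' := by
  unfold detL
  rw [← LinearMap.det_comp]
  rfl

lemma detL_smul {n : ℕ} (c : ℝ) (L : Eu n →L[ℝ] Eu n) : detL (c • L) = c ^ (n + 1) * detL L := by
  unfold detL
  rw [ContinuousLinearMap.toLinearMap_smul, LinearMap.det_smul]
  simp

lemma detL_rank_one {n : ℕ} (v w : Eu n) :
    detL (1 + (innerSL ℝ w).smulRight v) = 1 + ⟪w, v⟫_ℝ := by
  unfold detL
  have := LinearMap.transvection.det ((innerSL ℝ w : Eu n →L[ℝ] ℝ) : Eu n →ₗ[ℝ] ℝ) v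
  have h2 : (1 + (innerSL ℝ w).smulRight v : Eu n →L[ℝ] Eu n).toLinearMap =
      LinearMap.transvection ((innerSL ℝ w : Eu n →L[ℝ] ℝ) : Eu n →ₗ[ℝ] ℝ) v := by
    ext y
    simp [LinearMap.transvection]
  rw [h2, this]
  simp

lemma contDiff_detL {n : ℕ} : ContDiff ℝ ∞ (detL (n := n)) := by
  have : (detL (n := n)) = fun L => ∑ σ : Equiv.Perm (Fin (n + 1)),
      (Equiv.Perm.sign σ : ℝ) * ∏ i, (L (EuclideanSpace.basisFun (Fin (n+1)) ℝ i)) (σ i) := by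
    ext L
    unfold detL
    rw [← LinearMap.det_toMatrix (EuclideanSpace.basisFun (Fin (n+1)) ℝ).toBasis, Matrix.det_apply']
    simp [LinearMap.toMatrix_apply]
  rw [this]
  fun_prop

lemma fderiv_detL {n : ℕ} (M N B : Eu n →L[ℝ] Eu n) (h : M * N = 1) :
    fderiv ℝ detL M B = detL M * LinearMap.trace ℝ (Eu n) (N * B : Eu n →L[ℝ] Eu n).toLinearMap := by
  have h1 : HasFDerivAt detL (fderiv ℝ detL M) M :=
    (contDiff_detL.differentiable (by simp) M).hasFDerivAt
  have h2 := h1.hasLineDerivAt B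
  have h3 : HasDerivAt (fun t : ℝ => detL (M + t • B)) (fderiv ℝ detL M B) 0 := h2
  set b := (EuclideanSpace.basisFun (Fin (n+1)) ℝ).toBasis
  set X := LinearMap.toMatrix b b (N * B : Eu n →L[ℝ] Eu n).toLinearMap with hX
  have h4 : ∀ t : ℝ, detL (M + t • B) = detL M * (1 + t • X).det := by
    intro t
    have : M + t • B = M * (1 + t • (N * B)) := by
      have h' : ∀ y, M (N y) = y := fun y => congrArg (fun L : Eu n →L[ℝ] Eu n => L y) h
      ext1 y
      simp [h']
    rw [this, detL_mul]
    congr 1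
    unfold detL
    rw [← LinearMap.det_toMatrix b, ContinuousLinearMap.toLinearMap_add,
      ContinuousLinearMap.toLinearMap_smul, map_add, map_smul]
    congr 2
    exact LinearMap.toMatrix_one b
  have h5 : HasDerivAt (fun t : ℝ => detL M * (1 + t • X).det) (detL M * X.trace) 0 := by
    apply HasDerivAt.const_mul
    have h6 : HasDerivAt (fun t : ℝ => ((1 + (Polynomial.X : Polynomial ℝ) •
      X.map Polynomial.C).det).eval t) (X.trace) 0 := by
      have := ((1 + (Polynomial.X : Polynomial ℝ) • X.map Polynomial.C).det).hasDerivAt (0 : ℝ)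
      rwa [Matrix.derivative_det_one_add_X_smul] at this
    have h8 : (fun t : ℝ => (1 + t • X).det) = (fun t : ℝ => ((1 + (Polynomial.X : Polynomial ℝ) •
      X.map Polynomial.C).det).eval t) := ?_
    · rw [h8]; exact h6
    funext t
    rw [← Polynomial.coe_evalRingHom, RingHom.map_det]
    congr 1
    ext i j
    by_cases hij : i = j
    · subst hij; simp; exact mul_comm _ _
    · simp [hij]; exact mul_comm _ _
  have h7 : (fun t : ℝ => detL (M + t • B)) = fun t : ℝ => detL M * (1 + t • X).det := funext h4
  rw [h7] at h3
  rw [h3.unique h5, hX, ← LinearMap.trace_eq_matrix_trace]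

lemma trace_rank_one {n : ℕ} (l : Eu n →L[ℝ] ℝ) (y : Eu n) :
    LinearMap.trace ℝ (Eu n) (l.smulRight y : Eu n →L[ℝ] Eu n).toLinearMap = l y := by
  have := LinearMap.trace_smulRight (l : Eu n →ₗ[ℝ] ℝ) y
  exact this


lemma hasFDerivAt_inv_apply {E : Type*} [NormedAddCommGroup E] [InnerProductSpace ℝ E]
    [CompleteSpace E] (G : E → E →L[ℝ] E) (G' : E →L[ℝ] E →L[ℝ] E) (z w : E) (U : (E →L[ℝ] E)ˣ)
    (hU : (U : E →L[ℝ] E) = G z) (hG : HasFDerivAt G G' z) :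
    ∃ L : E →L[ℝ] E, HasFDerivAt (fun y => Ring.inverse (G y) w) L z ∧
      ∀ v, L v = -((U⁻¹ : (E →L[ℝ] E)ˣ) : E →L[ℝ] E) (G' v (((U⁻¹ : (E →L[ℝ] E)ˣ) : E →L[ℝ] E) w)) := by
  have hR : HasFDerivAt (Ring.inverse : (E →L[ℝ] E) → _)
      (-ContinuousLinearMap.mulLeftRight ℝ (E →L[ℝ] E) ((U⁻¹ : (E →L[ℝ] E)ˣ) : E →L[ℝ] E)
        ((U⁻¹ : (E →L[ℝ] E)ˣ) : E →L[ℝ] E)) (G z) := by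
    rw [← hU]; exact hasFDerivAt_ringInverse (𝕜 := ℝ) U
  have hinv' := HasFDerivAt.comp z hR hG
  have hNw0 := hinv'.clm_apply (hasFDerivAt_const w z)
  exact ⟨_, hNw0, fun v => by simp [← hU]⟩

lemma contDiffAt_inv_apply {E : Type*} [NormedAddCommGroup E] [InnerProductSpace ℝ E]
    [CompleteSpace E] (G : E → E →L[ℝ] E) (z w : E) 
    (hU : IsUnit (G z)) (hG : ContDiffAt ℝ ∞ G z) :
    ContDiffAt ℝ ∞ (fun y => Ring.inverse (G y) w) z := by
  obtain ⟨U, hU⟩ := hU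
  have hR : ContDiffAt ℝ ∞ (Ring.inverse : (E →L[ℝ] E) → _) (G z) := by
    rw [← hU]; exact contDiffAt_ringInverse ℝ U
  exact (hR.comp z hG).clm_apply contDiffAt_const

lemma V_deriv {n : ℕ} (u φ a b : Eu n → ℝ) (G : Eu n → Eu n) (z w₁ : Eu n)
    {u' φ' a' b' : Eu n →L[ℝ] ℝ} {G' : Eu n →L[ℝ] Eu n}
    (hu : HasFDerivAt u u' z) (hφ : HasFDerivAt φ φ' z) (ha : HasFDerivAt a a' z)
    (hb : HasFDerivAt b b' z) (hG : HasFDerivAt G G' z) :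
    fderiv ℝ (fun y => (u y * φ y * a y) • w₁ - (u y * φ y * b y) • G y) z =
      ((u z * φ z) • a' + a z • (u z • φ' + φ z • u')).smulRight w₁ -
        ((u z * φ z) • b' + b z • (u z • φ' + φ z • u')).smulRight (G z) -
        (u z * φ z * b z) • G' := by
  have hV := (((hu.mul hφ).mul ha).smul_const w₁).sub (((hu.mul hφ).mul hb).smul hG)
  have hD : fderiv ℝ (fun y => (u y * φ y * a y) • w₁ - (u y * φ y * b y) • G y) z = _ :=
    hV.fderiv
  rw [hD]
  ext1 v
  simp
  module

lemma trace_alg {n : ℕ} (u p a b k : ℝ) (z w₁ w₂ Fz : Eu n) (P U : Eu n →L[ℝ] ℝ)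
    (M N Q : Eu n →L[ℝ] Eu n) (hMN : M * N = 1)
    (hU : ∀ v, U v = k * ⟪Fz, v⟫_ℝ) (hs : ∀ v, ⟪Fz, v⟫_ℝ = ⟪z, M v⟫_ℝ)
    (ha : a = ⟪z, w₂⟫_ℝ) (hb : b = ⟪Fz, w₁⟫_ℝ)
    (hP : P (N w₂) = p * LinearMap.trace ℝ (Eu n) (N * Q : Eu n →L[ℝ] Eu n).toLinearMap) :
    LinearMap.trace ℝ (Eu n) (((u * p) • innerSL ℝ w₂ + a • (u • P + p • U)).smulRight w₁ -
        ((u * p) • (innerSL ℝ w₁).comp M + b • (u • P + p • U)).smulRight (N w₂) -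
        (u * p * b) • (-(N * Q)) : Eu n →L[ℝ] Eu n).toLinearMap = u * P w₁ * ⟪z, w₂⟫_ℝ := by
  have hMN' : M (N w₂) = w₂ := congrArg (fun L : Eu n →L[ℝ] Eu n => L w₂) hMN
  rw [ContinuousLinearMap.toLinearMap_sub, ContinuousLinearMap.toLinearMap_sub,
    ContinuousLinearMap.toLinearMap_smul, ContinuousLinearMap.toLinearMap_neg, map_sub, map_sub,
    map_smul, map_neg, trace_rank_one, trace_rank_one]
  have h10 : U (N w₂) = k * ⟪z, w₂⟫_ℝ := by rw [hU, hs, hMN']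
  have h11 := hU w₁
  simp only [add_apply, smul_apply, smul_eq_mul,
    ContinuousLinearMap.comp_apply, innerSL_apply_apply, hMN', h10, h11]
  rw [real_inner_comm w₁ w₂, ha, hb]
  linear_combination (u * ⟪Fz, w₁⟫_ℝ) * (-hP)

/-- The fundamental divergence computation. -/
lemma div_comp {n : ℕ} (F : Eu n → Eu n) (u : Eu n → ℝ) (z w₁ w₂ : Eu n)
    (hF : ContDiffAt ℝ ∞ F z) (hu : DifferentiableAt ℝ u z)
    (hM : IsUnit (fderiv ℝ F z)) (k : ℝ)
    (huF : ∀ v, fderiv ℝ u z v = k * ⟪F z, v⟫_ℝ)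
    (hsym : ∀ v, ⟪F z, v⟫_ℝ = ⟪z, fderiv ℝ F z v⟫_ℝ) :
    LinearMap.trace ℝ (Eu n) (fderiv ℝ (fun y =>
      (u y * detL (fderiv ℝ F y) * ⟪y, w₂⟫_ℝ) • w₁ -
      (u y * detL (fderiv ℝ F y) * ⟪F y, w₁⟫_ℝ) • (Ring.inverse (fderiv ℝ F y) w₂)) z).toLinearMap
    = u z * fderiv ℝ (fun y => detL (fderiv ℝ F y)) z w₁ * ⟪z, w₂⟫_ℝ := by
  obtain ⟨U, hU⟩ := hM
  obtain ⟨N, hN⟩ : ∃ N : Eu n →L[ℝ] Eu n,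
    N = ((U⁻¹ : (Eu n →L[ℝ] Eu n)ˣ) : Eu n →L[ℝ] Eu n) := ⟨_, rfl⟩
  have hMN : fderiv ℝ F z * N = 1 := by rw [← hU, hN]; exact U.mul_inv
  have hinv : Ring.inverse (fderiv ℝ F z) = N := by rw [← hU, hN]; exact Ring.inverse_unit U
  have hF' : HasFDerivAt F (fderiv ℝ F z) z := (hF.differentiableAt (by simp)).hasFDerivAt
  have hM1 : ContDiffAt ℝ ∞ (fderiv ℝ F) z := hF.fderiv_right (by simp)
  have hM' : HasFDerivAt (fderiv ℝ F) (fderiv ℝ (fderiv ℝ F) z) z :=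
    (hM1.differentiableAt (by simp)).hasFDerivAt
  have hsnd : IsSymmSndFDerivAt ℝ F z := hF.isSymmSndFDerivAt (by
    rw [minSmoothness_of_isRCLikeNormedField]; exact WithTop.coe_le_coe.2 le_top)
  have hphi : HasFDerivAt (fun y => detL (fderiv ℝ F y))
      (fderiv ℝ (fun y => detL (fderiv ℝ F y)) z) z :=
    ((contDiff_detL.differentiable (by simp) _).comp z hM'.differentiableAt).hasFDerivAt
  have hphi' : ∀ v, fderiv ℝ (fun y => detL (fderiv ℝ F y)) z v = detL (fderiv ℝ F z) *
      LinearMap.trace ℝ (Eu n) (N * (fderiv ℝ (fderiv ℝ F) z v) : Eu n →L[ℝ] Eu n).toLinearMap := by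
    intro v
    rw [← fderiv_detL _ _ _ hMN]
    have := ((contDiff_detL.differentiable (by simp) (fderiv ℝ F z)).hasFDerivAt.comp z hM').fderiv
    exact congrArg (fun L => L v) this
  have hNw : HasFDerivAt (fun y => Ring.inverse (fderiv ℝ F y) w₂)
      (-(N * (fderiv ℝ (fderiv ℝ F) z (N w₂)))) z := by
    obtain ⟨L, h1, h2⟩ := hasFDerivAt_inv_apply (fderiv ℝ F) _ z w₂ U hU hM'
    refine HasFDerivAt.congr_fderiv h1 ?_
    ext1 v
    have := hsnd v (N w₂)
    rw [h2 v, ← hN]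
    simp [← this]
  have hz : HasFDerivAt (fun y : Eu n => ⟪y, w₂⟫_ℝ) (innerSL ℝ w₂) z := by
    have : (fun y : Eu n => ⟪y, w₂⟫_ℝ) = innerSL ℝ w₂ := by
      ext y; simp [real_inner_comm]
    rw [this]; exact (innerSL ℝ w₂).hasFDerivAt
  have hFw : HasFDerivAt (fun y : Eu n => ⟪F y, w₁⟫_ℝ) ((innerSL ℝ w₁).comp (fderiv ℝ F z)) z := by
    have : (fun y : Eu n => ⟪F y, w₁⟫_ℝ) = (innerSL ℝ w₁) ∘ F := by
      ext y; simp [real_inner_comm]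
    rw [this]; exact (innerSL ℝ w₁).hasFDerivAt.comp z hF'
  rw [V_deriv u _ _ _ _ z w₁ hu.hasFDerivAt hphi hz hFw hNw, hinv]
  exact trace_alg _ _ _ _ k z w₁ w₂ (F z) _ _ _ N _ hMN huF hsym rfl rfl (hphi' _)

lemma euler_one {n : ℕ} {G : Type*} [NormedAddCommGroup G] [NormedSpace ℝ G] (f : Eu n → G)
    (z : Eu n) (hf : DifferentiableAt ℝ f z) (hh : ∀ c : ℝ, 0 < c → f (c • z) = c • f z) :
    fderiv ℝ f z z = f z := by
  have h1 : HasDerivAt (fun t : ℝ => t • z) ((1 : ℝ) • z) 1 := (hasDerivAt_id (1 : ℝ)).smul_const z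
  have h0 : HasFDerivAt f (fderiv ℝ f z) ((1 : ℝ) • z) := by rw [one_smul]; exact hf.hasFDerivAt
  have h2 := h0.comp_hasDerivAt (1 : ℝ) h1
  have h3 : HasDerivAt (fun t : ℝ => t • f z) ((1 : ℝ) • f z) 1 :=
    (hasDerivAt_id (1 : ℝ)).smul_const (f z)
  have h4 : (f ∘ fun t : ℝ => t • z) =ᶠ[𝓝 1] fun t : ℝ => t • f z := by
    filter_upwards [lt_mem_nhds (zero_lt_one' ℝ)] with t ht using hh t ht
  have := h2.unique (h3.congr_of_eventuallyEq h4)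
  simpa using this

lemma euler_zero {n : ℕ} {G : Type*} [NormedAddCommGroup G] [NormedSpace ℝ G] (f : Eu n → G)
    (z : Eu n) (hf : DifferentiableAt ℝ f z) (hh : ∀ c : ℝ, 0 < c → f (c • z) = f z) :
    fderiv ℝ f z z = 0 := by
  have h1 : HasDerivAt (fun t : ℝ => t • z) ((1 : ℝ) • z) 1 := (hasDerivAt_id (1 : ℝ)).smul_const z
  have h0 : HasFDerivAt f (fderiv ℝ f z) ((1 : ℝ) • z) := by rw [one_smul]; exact hf.hasFDerivAt
  have h2 := h0.comp_hasDerivAt (1 : ℝ) h1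
  have h3 : HasDerivAt (fun _ : ℝ => f z) 0 1 := hasDerivAt_const _ _
  have h4 : (f ∘ fun t : ℝ => t • z) =ᶠ[𝓝 1] fun _ : ℝ => f z := by
    filter_upwards [lt_mem_nhds (zero_lt_one' ℝ)] with t ht using hh t ht
  have := h2.unique (h3.congr_of_eventuallyEq h4)
  simpa using this

open scoped Pointwise in
lemma sfn_hom {n : ℕ} (K : Set (Eu n)) (c : ℝ) (hc : 0 < c) (z : Eu n) :
    sfn K (c • z) = c * sfn K z := by
  unfold sfn
  have : (fun y => ⟪c • z, y⟫_ℝ) '' K = c • ((fun y => ⟪z, y⟫_ℝ) '' K) := by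
    rw [← Set.image_smul, Set.image_image]
    simp [real_inner_smul_left]
  rw [this, Real.sSup_smul_of_nonneg hc.le, smul_eq_mul]

section body
variable {n : ℕ} {K : Set (Eu n)}

lemma sfn_pos (hK : IsSmoothConvexBody K) (z : Eu n) (hz : z ≠ 0) : 0 < sfn K z := by
  have hz' : 0 < ‖z‖ := norm_pos_iff.2 hz
  have h1 : sfn K z = ‖z‖ * sfn K (‖z‖⁻¹ • z) := by
    rw [← sfn_hom K _ hz', smul_inv_smul₀ hz'.ne']
  have h2 := hK.pos ⟨‖z‖⁻¹ • z, by simp [norm_smul, hz'.ne']⟩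
  rw [h1]
  exact mul_pos hz' h2

lemma sfn_smooth (hK : IsSmoothConvexBody K) (z : Eu n) (hz : z ≠ 0) :
    ContDiffAt ℝ ∞ (sfn K) z :=
  hK.smooth.contDiffAt (isOpen_compl_singleton.mem_nhds hz)

lemma inner_grad (f : Eu n → ℝ) (z v : Eu n) : ⟪gradient f z, v⟫_ℝ = fderiv ℝ f z v := by
  simp [gradient]

lemma grad_smooth (hK : IsSmoothConvexBody K) (z : Eu n) (hz : z ≠ 0) :
    ContDiffAt ℝ ∞ (gradient (sfn K)) z := by
  have h1 : ContDiffAt ℝ ∞ (fderiv ℝ (sfn K)) z := (sfn_smooth hK z hz).fderiv_right (by simp)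
  exact ((InnerProductSpace.toDual ℝ (Eu n)).symm.contDiff.contDiffAt).comp z h1

lemma fderiv_sfn_hom (c : ℝ) (hc : 0 < c) (z : Eu n) (hz : z ≠ 0) :
    fderiv ℝ (sfn K) (c • z) = fderiv ℝ (sfn K) z := by
  have := fderiv_hom (f := sfn K) c c (fun y _ => sfn_hom K c hc y) z hz
  exact smul_right_injective _ hc.ne' this

lemma grad_hom (c : ℝ) (hc : 0 < c) (z : Eu n) (hz : z ≠ 0) :
    gradient (sfn K) (c • z) = gradient (sfn K) z := by
  unfold gradient
  rw [fderiv_sfn_hom c hc z hz]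

lemma hess_inner (hK : IsSmoothConvexBody K) (z : Eu n) (hz : z ≠ 0) (v w : Eu n) :
    ⟪hessA K z v, w⟫_ℝ = fderiv ℝ (fderiv ℝ (sfn K)) z v w := by
  have h1 : ContDiffAt ℝ ∞ (fderiv ℝ (sfn K)) z := (sfn_smooth hK z hz).fderiv_right (by simp)
  have h2 := (h1.differentiableAt (by simp)).hasFDerivAt
  have h3 := (grad_smooth hK z hz).differentiableAt (by simp) |>.hasFDerivAt
  have h4 := ((innerSL ℝ w).hasFDerivAt.comp z h3)
  have h5 := h2.clm_apply (hasFDerivAt_const w z)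
  have h6 : (innerSL ℝ w) ∘ (gradient (sfn K)) = fun y => fderiv ℝ (sfn K) y w := by
    ext y
    rw [← inner_grad, real_inner_comm]; rfl
  rw [h6] at h4
  have h7 := congrArg (fun L : Eu n →L[ℝ] ℝ => L v) (h4.unique h5)
  have h8 : ⟪w, hessA K z v⟫_ℝ = fderiv ℝ (fderiv ℝ (sfn K)) z v w := by
    simpa [hessA] using h7
  rw [real_inner_comm, h8]

lemma hess_symm (hK : IsSmoothConvexBody K) (z : Eu n) (hz : z ≠ 0) (v w : Eu n) :
    ⟪hessA K z v, w⟫_ℝ = ⟪v, hessA K z w⟫_ℝ := by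
  have hsnd : IsSymmSndFDerivAt ℝ (sfn K) z := (sfn_smooth hK z hz).isSymmSndFDerivAt (by
    rw [minSmoothness_of_isRCLikeNormedField]; exact WithTop.coe_le_coe.2 le_top)
  rw [real_inner_comm _ v, hess_inner hK z hz, hess_inner hK z hz]
  exact hsnd v w

lemma hess_self (hK : IsSmoothConvexBody K) (z : Eu n) (hz : z ≠ 0) : hessA K z z = 0 :=
  euler_zero _ z ((grad_smooth hK z hz).differentiableAt (by simp))
    (fun c hc => grad_hom c hc z hz)

lemma grad_self (hK : IsSmoothConvexBody K) (z : Eu n) (hz : z ≠ 0) :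
    ⟪gradient (sfn K) z, z⟫_ℝ = sfn K z := by
  rw [inner_grad]
  exact euler_one _ z ((sfn_smooth hK z hz).differentiableAt (by simp))
    (fun c hc => sfn_hom K c hc z)

/-- The gradient of `h²/2`. -/
def FF (K : Set (Eu n)) (z : Eu n) : Eu n := sfn K z • gradient (sfn K) z

lemma FF_smooth (hK : IsSmoothConvexBody K) (z : Eu n) (hz : z ≠ 0) :
    ContDiffAt ℝ ∞ (FF K) z := (sfn_smooth hK z hz).smul (grad_smooth hK z hz)

lemma FF_hom (c : ℝ) (hc : 0 < c) (z : Eu n) (hz : z ≠ 0) : FF K (c • z) = c • FF K z := by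
  unfold FF
  rw [sfn_hom K c hc, grad_hom c hc z hz, mul_smul]

lemma MM_hom (c : ℝ) (hc : 0 < c) (z : Eu n) (hz : z ≠ 0) :
    fderiv ℝ (FF K) (c • z) = fderiv ℝ (FF K) z := by
  have := fderiv_hom (f := FF K) c c (fun y hy => FF_hom c hc y hy) z hz
  exact smul_right_injective _ hc.ne' this

lemma MM_apply (hK : IsSmoothConvexBody K) (z : Eu n) (hz : z ≠ 0) (v : Eu n) :
    fderiv ℝ (FF K) z v =
      sfn K z • hessA K z v + ⟪gradient (sfn K) z, v⟫_ℝ • gradient (sfn K) z := by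
  have h1 := ((sfn_smooth hK z hz).differentiableAt (by simp)).hasFDerivAt
  have h3 := (grad_smooth hK z hz).differentiableAt (by simp) |>.hasFDerivAt
  have h4 : fderiv ℝ (FF K) z = _ := (h1.smul h3).fderiv
  rw [h4, inner_grad]
  simp [hessA]

lemma MM_self (hK : IsSmoothConvexBody K) (z : Eu n) (hz : z ≠ 0) :
    fderiv ℝ (FF K) z z = FF K z := by
  rw [MM_apply hK z hz, hess_self hK z hz, grad_self hK z hz]
  simp [FF]

lemma MM_sym (hK : IsSmoothConvexBody K) (z : Eu n) (hz : z ≠ 0) (v : Eu n) :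
    ⟪FF K z, v⟫_ℝ = ⟪z, fderiv ℝ (FF K) z v⟫_ℝ := by
  rw [MM_apply hK z hz, inner_add_right, real_inner_smul_right, ← hess_symm hK z hz,
    hess_self hK z hz, real_inner_smul_right, real_inner_comm _ z, grad_self hK z hz, FF,
    real_inner_smul_left]
  simp [mul_comm]

lemma det_MM_unit (hK : IsSmoothConvexBody K) (x : Eu n) (hx : ‖x‖ = 1) :
    detL (fderiv ℝ (FF K) x) = sfn K x ^ (n + 2) * rK K x := by
  have hx0 : x ≠ 0 := by rintro rfl; simp at hx
  have hh := sfn_pos hK x hx0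
  have hxx : ⟪x, x⟫_ℝ = 1 := by rw [real_inner_self_eq_norm_sq, hx]; norm_num
  have hpx := grad_self hK x hx0
  have hxp : ⟪x, gradient (sfn K) x⟫_ℝ = sfn K x := by rw [real_inner_comm]; exact hpx
  have key : fderiv ℝ (FF K) x = sfn K x •
      ((1 + (innerSL ℝ x).smulRight (gradient (sfn K) x - x)) * ((hessA K x + tens x) *
      (1 + (innerSL ℝ ((sfn K x)⁻¹ • gradient (sfn K) x - x)).smulRight x))) := by
    ext1 v
    rw [MM_apply hK x hx0]
    have hA : ⟪x, hessA K x v⟫_ℝ = 0 := by rw [← hess_symm hK x hx0, hess_self hK x hx0]; simp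
    have hA' := hess_self hK x hx0
    simp [tens, hA, hA', hx, inner_add_right,
      real_inner_smul_right]
    match_scalars <;> field_simp <;> ring
  have hr : rK K x = detL (hessA K x + tens x) := rfl
  rw [key, detL_smul, detL_mul, detL_mul, detL_rank_one, detL_rank_one, hr, inner_sub_right,
    inner_sub_left, hxp, hxx, real_inner_smul_left, hpx]
  field_simp
  ring

lemma rK_ne (hK : IsSmoothConvexBody K) (x : Eu n) (hx : ‖x‖ = 1) : rK K x ≠ 0 := by
  unfold rK
  intro h
  have h2 := LinearMap.bot_lt_ker_of_det_eq_zero h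
  obtain ⟨v, hv, hv0⟩ := (Submodule.ne_bot_iff _).1 h2.ne'
  have h3 := hK.posdef ⟨x, by simpa using hx⟩ v hv0
  have h4 : (hessA K x + tens x) v = 0 := hv
  simp only [h4] at h3
  simp at h3

lemma det_MM (hK : IsSmoothConvexBody K) (z : Eu n) (hz : z ≠ 0) :
    detL (fderiv ℝ (FF K) z) = sfn K (‖z‖⁻¹ • z) ^ (n + 2) * rK K (‖z‖⁻¹ • z) := by
  have hz' : 0 < ‖z‖ := norm_pos_iff.2 hz
  rw [← MM_hom _ (inv_pos.2 hz') z hz, det_MM_unit hK]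
  simp [norm_smul, hz'.ne']

lemma det_MM_ne (hK : IsSmoothConvexBody K) (z : Eu n) (hz : z ≠ 0) :
    detL (fderiv ℝ (FF K) z) ≠ 0 := by
  have hz' : 0 < ‖z‖ := norm_pos_iff.2 hz
  rw [det_MM hK z hz]
  refine mul_ne_zero (pow_ne_zero _ (sfn_pos hK _ ?_).ne') (rK_ne hK _ ?_)
  · simp [hz]
  · simp [norm_smul, hz'.ne']

lemma MM_unit (hK : IsSmoothConvexBody K) (z : Eu n) (hz : z ≠ 0) :
    IsUnit (fderiv ℝ (FF K) z) := by
  have h := det_MM_ne hK z hz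
  have h1 := LinearMap.equivOfDetNeZero _ h
  have hM : (LinearMap.equivOfDetNeZero _ h).toContinuousLinearEquiv.toContinuousLinearMap =
    fderiv ℝ (FF K) z := by
    ext1 v; rfl
  rw [← hM]
  exact (ContinuousLinearEquiv.toUnit _).isUnit

lemma led_eq (hK : IsSmoothConvexBody K) (z : Eu n) (hz : z ≠ 0) :
    logEntropyDensity K z = Real.log (detL (fderiv ℝ (FF K) z)) := by
  have hz' : 0 < ‖z‖ := norm_pos_iff.2 hz
  rw [det_MM hK z hz, logEntropyDensity, sfn_hom K _ (inv_pos.2 hz')]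
  congr 1
  rw [Real.rpow_neg hz'.le]
  have : ‖z‖ ^ ((n : ℝ) + 2) = ‖z‖ ^ (n + 2) := by
    rw [← Real.rpow_natCast]; push_cast; rfl
  rw [this, mul_pow, inv_pow]
  ring

end body

section final
variable {n : ℕ} {K : Set (Eu n)}

/-- The weight `h^{-(n+1)}`. -/
def uu (K : Set (Eu n)) (z : Eu n) : ℝ := (sfn K z ^ (n + 1))⁻¹

/-- The vector field whose divergence is the integrand. -/
def VV (K : Set (Eu n)) (w₁ w₂ : Eu n) (y : Eu n) : Eu n :=
  (uu K y * detL (fderiv ℝ (FF K) y) * ⟪y, w₂⟫_ℝ) • w₁ -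
      (uu K y * detL (fderiv ℝ (FF K) y) * ⟪FF K y, w₁⟫_ℝ) • (Ring.inverse (fderiv ℝ (FF K) y) w₂)

lemma uu_smooth (hK : IsSmoothConvexBody K) (z : Eu n) (hz : z ≠ 0) :
    ContDiffAt ℝ ∞ (uu K) z :=
  ((sfn_smooth hK z hz).pow (n + 1)).inv (pow_ne_zero _ (sfn_pos hK z hz).ne')

lemma uu_fderiv (hK : IsSmoothConvexBody K) (z : Eu n) (hz : z ≠ 0) :
    ∃ k : ℝ, ∀ v, fderiv ℝ (uu K) z v = k * ⟪FF K z, v⟫_ℝ := by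
  have hh := sfn_pos hK z hz
  have h1 := ((sfn_smooth hK z hz).differentiableAt (by simp)).hasFDerivAt
  have h2 : HasDerivAt (fun t : ℝ => (t ^ (n + 1))⁻¹)
      (deriv (fun t : ℝ => (t ^ (n + 1))⁻¹) (sfn K z)) (sfn K z) := by
    apply DifferentiableAt.hasDerivAt
    have : sfn K z ^ (n + 1) ≠ 0 := pow_ne_zero _ hh.ne'
    fun_prop (disch := assumption)
  have h3 : fderiv ℝ (uu K) z = _ := (h2.comp_hasFDerivAt z h1).fderiv
  refine ⟨deriv (fun t : ℝ => (t ^ (n + 1))⁻¹) (sfn K z) / sfn K z, fun v => ?_⟩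
  rw [h3, FF, real_inner_smul_left, inner_grad, smul_apply, smul_eq_mul]
  field_simp

lemma VV_smooth (hK : IsSmoothConvexBody K) (w₁ w₂ z : Eu n) (hz : z ≠ 0) :
    ContDiffAt ℝ ∞ (VV K w₁ w₂) z := by
  have hM : ContDiffAt ℝ ∞ (fderiv ℝ (FF K)) z := (FF_smooth hK z hz).fderiv_right (by simp)
  have hup := (uu_smooth hK z hz).mul (contDiff_detL.contDiffAt.comp z hM)
  exact ((hup.mul (contDiffAt_id.inner ℝ contDiffAt_const)).smul contDiffAt_const).sub
    ((hup.mul ((FF_smooth hK z hz).inner ℝ contDiffAt_const)).smul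
      (contDiffAt_inv_apply _ z w₂ (MM_unit hK z hz) hM))

lemma VV_hom (w₁ w₂ : Eu n) (c : ℝ) (hc : 0 < c) (z : Eu n) (hz : z ≠ 0) :
    VV K w₁ w₂ (c • z) = (c ^ n)⁻¹ • VV K w₁ w₂ z := by
  unfold VV uu
  rw [MM_hom c hc z hz, FF_hom c hc z hz, sfn_hom K c hc, real_inner_smul_left,
    real_inner_smul_left, smul_sub, smul_smul, smul_smul]
  have : ∀ a p i : ℝ, ((c * a) ^ (n + 1))⁻¹ * p * (c * i) = (c ^ n)⁻¹ * ((a ^ (n + 1))⁻¹ * p * i) := by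
    intro a p i
    rw [mul_pow, mul_inv]
    field_simp
    ring
  rw [this, this]

lemma integral_VV (hK : IsSmoothConvexBody K) (w₁ w₂ : Eu n) :
    ∫ x : Sph n, LinearMap.trace ℝ (Eu n) (fderiv ℝ (VV K w₁ w₂) x).toLinearMap ∂sphMeas n = 0 := by
  have hfin : IsFiniteMeasure (sphMeas n) := by unfold sphMeas; infer_instance
  set b := EuclideanSpace.basisFun (Fin (n+1)) ℝ
  have hne : ∀ x : Sph n, (x : Eu n) ≠ 0 := fun x => ne_zero_of_mem_unit_sphere x
  have hV : ∀ i, ∀ z : Eu n, z ≠ 0 → ContDiffAt ℝ ∞ (fun y => ⟪b i, VV K w₁ w₂ y⟫_ℝ) z :=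
    fun i z hz => contDiffAt_const.inner ℝ (VV_smooth hK w₁ w₂ z hz)
  have hd : ∀ i, ∀ z : Eu n, z ≠ 0 → ∀ v, fderiv ℝ (fun y => ⟪b i, VV K w₁ w₂ y⟫_ℝ) z v =
      ⟪b i, fderiv ℝ (VV K w₁ w₂) z v⟫_ℝ := by
    intro i z hz v
    have h1 := ((VV_smooth hK w₁ w₂ z hz).differentiableAt (by simp)).hasFDerivAt
    have h2 : fderiv ℝ (fun y => ⟪b i, VV K w₁ w₂ y⟫_ℝ) z = _ :=
      ((innerSL ℝ (b i)).hasFDerivAt.comp z h1).fderiv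
    rw [h2]; rfl
  have e : ∀ x : Sph n, LinearMap.trace ℝ (Eu n) (fderiv ℝ (VV K w₁ w₂) x).toLinearMap =
      ∑ i, fderiv ℝ (fun y => ⟪b i, VV K w₁ w₂ y⟫_ℝ) (x : Eu n) (b i) := by
    intro x
    rw [LinearMap.trace_eq_sum_inner _ b]
    refine Finset.sum_congr rfl fun i _ => ?_
    rw [hd i x (hne x)]; rfl
  simp_rw [e]
  rw [integral_finsetSum]
  · refine Finset.sum_eq_zero fun i _ => ?_
    apply sphere_div_zero
    · intro z hz
      exact ((hV i z hz).of_le (WithTop.coe_le_coe.2 le_top)).contDiffWithinAt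
    · intro r hr z hz
      rw [VV_hom w₁ w₂ r hr z hz, real_inner_smul_right]
  · intro i _
    have hc : Continuous fun x : Sph n =>
        fderiv ℝ (fun y => ⟪b i, VV K w₁ w₂ y⟫_ℝ) (x : Eu n) (b i) := by
      rw [continuous_iff_continuousAt]
      intro x
      have h1 : ContDiffAt ℝ ∞ (fderiv ℝ (fun y => ⟪b i, VV K w₁ w₂ y⟫_ℝ)) (x : Eu n) :=
        (hV i x (hne x)).fderiv_right (by simp)
      have h2 : ContinuousAt (fun z => fderiv ℝ (fun y => ⟪b i, VV K w₁ w₂ y⟫_ℝ) z (b i)) (x : Eu n) :=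
        h1.continuousAt.clm_apply continuousAt_const
      exact ContinuousAt.comp (f := fun x : Sph n => (x : Eu n)) h2 continuous_subtype_val.continuousAt
    exact hc.integrable_of_hasCompactSupport (HasCompactSupport.of_compactSpace _)

lemma integrand_eq (hK : IsSmoothConvexBody K) (w₁ w₂ : Eu n) (x : Sph n) :
    ⟪gradient (logEntropyDensity K) (x : Eu n), w₁⟫_ℝ * ⟪(x : Eu n), w₂⟫_ℝ * dens K (x : Eu n) =
      LinearMap.trace ℝ (Eu n) (fderiv ℝ (VV K w₁ w₂) x).toLinearMap := by
  have hx : (x : Eu n) ≠ 0 := ne_zero_of_mem_unit_sphere x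
  have hx1 : ‖(x : Eu n)‖ = 1 := by simp
  obtain ⟨k, hk⟩ := uu_fderiv hK x hx
  have h := div_comp (FF K) (uu K) x w₁ w₂ (FF_smooth hK x hx)
    ((uu_smooth hK x hx).differentiableAt (by simp)) (MM_unit hK x hx) k hk (MM_sym hK x hx)
  have h' : LinearMap.trace ℝ (Eu n) (fderiv ℝ (VV K w₁ w₂) x).toLinearMap = _ := h
  rw [h', inner_grad]
  have hM : ContDiffAt ℝ ∞ (fderiv ℝ (FF K)) (x : Eu n) := (FF_smooth hK x hx).fderiv_right (by simp)
  have hphi : HasFDerivAt (fun y => detL (fderiv ℝ (FF K) y))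
      (fderiv ℝ (fun y => detL (fderiv ℝ (FF K) y)) x) (x : Eu n) :=
    ((contDiff_detL.differentiable (by simp) _).comp (x : Eu n)
      (hM.differentiableAt (by simp))).hasFDerivAt
  have hlog := (hphi.log (det_MM_ne hK x hx)).fderiv
  have hev : logEntropyDensity K =ᶠ[𝓝 (x : Eu n)]
      fun y => Real.log (detL (fderiv ℝ (FF K) y)) := by
    filter_upwards [isOpen_compl_singleton.mem_nhds hx] with y hy using led_eq hK y hy
  rw [hev.fderiv_eq, hlog, smul_apply, smul_eq_mul, dens, uu, det_MM_unit hK x hx1]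
  have h1 := (sfn_pos hK x hx).ne'
  have h2 := rK_ne hK x hx1
  field_simp
  ring

end final

/-- `∫ ∇̄ log(h^{n+2}/𝒦) ⊗ x dV = 0`, i.e. for all `w₁, w₂`:
`∫ ⟨∇g(x), w₁⟩ ⟨x, w₂⟩ h det(A+x⊗x) dθ = 0`, where `g` is the 0-homogeneous
extension of `log(h^{n+2}/𝒦)`. -/
theorem centro_affine_identity (n : ℕ) (hn : 1 ≤ n)
    (K : Set (Eu n)) (hK : IsSmoothConvexBody K) :
    ∀ w₁ w₂ : Eu n,
      ∫ x : Sph n, ⟪gradient (logEntropyDensity K) (x : Eu n), w₁⟫_ℝ * ⟪(x : Eu n), w₂⟫_ℝ *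
          dens K (x : Eu n) ∂sphMeas n = 0 := by
  intro w₁ w₂
  simp_rw [integrand_eq hK w₁ w₂]
  exact integral_VV hK w₁ w₂
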